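/- For all finite nonnegative Borel measures μ₀, μ₁ on Ω, the infimum defining the Hellinger–Kantorovich distance HK(μ₀,μ₁) is attained: there exists a plan γ with homogeneous marginals (μ₀,μ₁) such that ∬ d_C(z₀,z₁)² dγ(z₀,z₁) = HK(μ₀,μ₁)². -/

import Mathlib

/-!
The existence of an optimal plan follows from the direct method, after a reduction by scaling.

Call a plan *genuine* if `r₀²` and `r₁²` are integrable, so that the homogeneous marginal
conditions are honest identities. Every integrand that matters (`r₀² φ(x₀)`, `r₁² φ(x₁)` and
`d_C²`) is `2`-homogeneous in `(r₀, r₁)`. Hence, with `θ² = r₀² + r₁²`, the weighted measure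
`θ² γ`, pushed forward under `(x₀, r₀; x₁, r₁) ↦ (x₀, r₀/θ; x₁, r₁/θ)`, has the same marginals and
the same cost as `γ`. It lives on the compact set `{x₀, x₁ ∈ Ω, r₀² + r₁² = 1}`, where its total
mass is forced to be `μ₀(Ω) + μ₁(Ω)` (`exists_normalized`). Finite measures of bounded mass on a
compact space are weakly compact, while the constraints and the cost are weakly continuous on that
space, so the cost attains its minimum among genuine plans (`exists_genuine_min`).

It remains to compare with plans that are not genuine, for which a Bochner integral in the marginal
conditions or in the cost may be `0` for want of integrability. If some plan has cost `0`, it is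
optimal because costs are nonnegative. Otherwise `μ₀` and `μ₁` do not both vanish, so testing the
marginals with `φ = 1` makes one of the `rᵢ²` integrable. The cost is integrable as well, and
`(r₀ - r₁)² ≤ d_C²` controls the other one (`IsHKPlan.isGenuine`), so all plans are genuine.
-/

open MeasureTheory Set
open scoped NNReal ENNReal

/-- The ambient Euclidean space `ℝ^d`. -/
noncomputable abbrev Euc (d : ℕ) := EuclideanSpace ℝ (Fin d)

/-- `cos_π(a) := cos (min |a| π)`. -/
noncomputable def cosPi (a : ℝ) : ℝ := Real.cos (min |a| Real.pi)

/-- The cone distance on `ℝ^d × [0,∞)`: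
`d_C((x₀,r₀),(x₁,r₁)) = √(r₀² + r₁² − 2r₀r₁ cos_π(|x₁−x₀|))`.
All points with `r = 0` are identified with the tip of the cone. -/
noncomputable def coneDist {d : ℕ} (z₀ z₁ : Euc d × ℝ≥0) : ℝ :=
  Real.sqrt ((z₀.2 : ℝ)^2 + (z₁.2 : ℝ)^2
    - 2 * (z₀.2 : ℝ) * (z₁.2 : ℝ) * cosPi (dist z₁.1 z₀.1))

/-- `γ` is a plan on (the cone over) `Ω` with homogeneous marginals `(μ₀, μ₁)`:
a finite nonnegative Borel measure on `(Ω×[0,∞))²` such that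
`∬ rᵢ² φ(xᵢ) dγ = ∫ φ dμᵢ` for every (bounded) continuous `φ` and `i = 0,1`. -/
def IsHKPlan {d : ℕ} (Ω : Set (Euc d)) (γ : Measure ((Euc d × ℝ≥0) × (Euc d × ℝ≥0)))
    (μ₀ μ₁ : Measure (Euc d)) : Prop :=
  IsFiniteMeasure γ ∧
  γ (((Ω ×ˢ (univ : Set ℝ≥0)) ×ˢ (Ω ×ˢ (univ : Set ℝ≥0)))ᶜ) = 0 ∧
  (∀ φ : BoundedContinuousFunction (Euc d) ℝ,
    ∫ p, (p.1.2 : ℝ)^2 * φ p.1.1 ∂γ = ∫ x, φ x ∂μ₀) ∧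
  (∀ φ : BoundedContinuousFunction (Euc d) ℝ,
    ∫ p, (p.2.2 : ℝ)^2 * φ p.2.1 ∂γ = ∫ x, φ x ∂μ₁)

/-- The squared Hellinger–Kantorovich distance:
`HK(μ₀,μ₁)² = inf { ∬ d_C(z₀,z₁)² dγ : γ a plan with homogeneous marginals (μ₀,μ₁) }`. -/
noncomputable def HK2 {d : ℕ} (Ω : Set (Euc d)) (μ₀ μ₁ : Measure (Euc d)) : ℝ :=
  sInf { I : ℝ | ∃ γ, IsHKPlan Ω γ μ₀ μ₁ ∧ I = ∫ p, (coneDist p.1 p.2)^2 ∂γ }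

/-- The Hellinger–Kantorovich distance on finite nonnegative Borel measures on `Ω`. -/
noncomputable def HK {d : ℕ} (Ω : Set (Euc d)) (μ₀ μ₁ : Measure (Euc d)) : ℝ :=
  Real.sqrt (HK2 Ω μ₀ μ₁)

namespace HKExistence

open Filter Topology

/-- The space of pairs of points of the (unquotiented) cone. -/
abbrev Pair (d : ℕ) := (Euc d × ℝ≥0) × (Euc d × ℝ≥0)

/-! ### Genuine plans and the cost function -/

/-- A plan whose homogeneous marginal conditions involve only integrable functions. -/
def IsGenuine {d : ℕ} (Ω : Set (Euc d)) (γ : Measure (Pair d)) (μ₀ μ₁ : Measure (Euc d)) : Prop :=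
  IsHKPlan Ω γ μ₀ μ₁ ∧ Integrable (fun p : Pair d => (p.1.2 : ℝ)^2) γ ∧
    Integrable (fun p : Pair d => (p.2.2 : ℝ)^2) γ

/-- The squared cone distance, as a continuous function of the pair. -/
noncomputable def cost {d : ℕ} (p : Pair d) : ℝ :=
  (p.1.2 : ℝ)^2 + (p.2.2 : ℝ)^2 - 2 * (p.1.2 : ℝ) * (p.2.2 : ℝ) * cosPi (dist p.2.1 p.1.1)

variable {d : ℕ}

lemma sq_sub_le_cost (p : Pair d) : ((p.1.2 : ℝ) - p.2.2)^2 ≤ cost p := by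
  have h : cosPi (dist p.2.1 p.1.1) ≤ 1 := Real.cos_le_one _
  have h' : 0 ≤ (p.1.2 : ℝ) * p.2.2 := by positivity
  unfold cost
  nlinarith [mul_le_mul_of_nonneg_left h h']

lemma coneDist_sq (p : Pair d) : (coneDist p.1 p.2)^2 = cost p :=
  Real.sq_sqrt ((sq_nonneg _).trans (sq_sub_le_cost p))

lemma continuous_cost : Continuous (cost (d := d)) := by
  unfold cost cosPi
  fun_prop

/-! ### Integrability of plans -/

/-- This rests on `r₀² ≤ 2 r₁² + 2 (r₀ - r₁)² ≤ 2 r₁² + 2 d_C²` and the symmetric estimate. -/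
lemma integrable_of_cost {γ : Measure (Pair d)} (hc : Integrable (cost (d := d)) γ) :
    Integrable (fun p : Pair d => (p.1.2 : ℝ)^2) γ ↔
      Integrable (fun p : Pair d => (p.2.2 : ℝ)^2) γ := by
  constructor
  · intro h
    refine ((h.const_mul 2).add (hc.const_mul 2)).mono'
      (by fun_prop : Continuous fun p : Pair d => (p.2.2 : ℝ)^2).aestronglyMeasurable
      (Eventually.of_forall fun p => ?_)
    have := sq_sub_le_cost p
    simp only [Pi.add_apply, Real.norm_eq_abs, abs_of_nonneg (sq_nonneg (p.2.2 : ℝ))]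
    nlinarith [sq_nonneg (2 * (p.1.2 : ℝ) - p.2.2)]
  · intro h
    refine ((h.const_mul 2).add (hc.const_mul 2)).mono'
      (by fun_prop : Continuous fun p : Pair d => (p.1.2 : ℝ)^2).aestronglyMeasurable
      (Eventually.of_forall fun p => ?_)
    have := sq_sub_le_cost p
    simp only [Pi.add_apply, Real.norm_eq_abs, abs_of_nonneg (sq_nonneg (p.1.2 : ℝ))]
    nlinarith [sq_nonneg (2 * (p.2.2 : ℝ) - p.1.2)]

lemma integrable_of_marginal {γ : Measure (Pair d)} {r : Pair d → ℝ} {x : Pair d → Euc d}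
    {μ : Measure (Euc d)} [IsFiniteMeasure μ] (hμ : μ ≠ 0)
    (h : ∀ φ : BoundedContinuousFunction (Euc d) ℝ, ∫ p, r p * φ (x p) ∂γ = ∫ y, φ y ∂μ) :
    Integrable r γ := by
  by_contra hr
  have h1 := h (BoundedContinuousFunction.const _ 1)
  simp only [BoundedContinuousFunction.const_apply, mul_one, integral_const, smul_eq_mul] at h1
  rw [integral_undef hr, eq_comm, measureReal_eq_zero_iff] at h1
  exact hμ (Measure.measure_univ_eq_zero.1 h1)

/-- A plan of nonzero cost between measures that do not both vanish is genuine. -/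
lemma _root_.IsHKPlan.isGenuine {Ω : Set (Euc d)} {γ : Measure (Pair d)} {μ₀ μ₁ : Measure (Euc d)}
    [IsFiniteMeasure μ₀] [IsFiniteMeasure μ₁] (h : IsHKPlan Ω γ μ₀ μ₁)
    (hc : ∫ p, cost p ∂γ ≠ 0) (hμ : μ₀ ≠ 0 ∨ μ₁ ≠ 0) : IsGenuine Ω γ μ₀ μ₁ := by
  have hci : Integrable (cost (d := d)) γ := by
    by_contra hn
    exact hc (integral_undef hn)
  rcases hμ with hμ | hμ
  · have := integrable_of_marginal hμ h.2.2.1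
    exact ⟨h, this, (integrable_of_cost hci).1 this⟩
  · have := integrable_of_marginal hμ h.2.2.2
    exact ⟨h, (integrable_of_cost hci).2 this, this⟩

/-! ### Existence of a genuine plan -/

/-- A plan that sends all of `μ₀` to the tip of the cone and creates all of `μ₁` from the tip. -/
lemma exists_genuine (Ω : Set (Euc d)) (hΩ : MeasurableSet Ω) (μ₀ μ₁ : Measure (Euc d))
    [IsFiniteMeasure μ₀] [IsFiniteMeasure μ₁] (h₀ : μ₀ Ωᶜ = 0) (h₁ : μ₁ Ωᶜ = 0) :
    ∃ γ, IsGenuine Ω γ μ₀ μ₁ := by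
  let f₀ : Euc d → Pair d := fun x => ((x, 1), (x, 0))
  let f₁ : Euc d → Pair d := fun x => ((x, 0), (x, 1))
  have m₀ : Measurable f₀ := by fun_prop
  have m₁ : Measurable f₁ := by fun_prop
  have hint : ∀ g : Pair d → ℝ, Continuous g → Integrable (g ∘ f₀) μ₀ → Integrable (g ∘ f₁) μ₁ →
      Integrable g (μ₀.map f₀ + μ₁.map f₁) ∧
      ∫ p, g p ∂(μ₀.map f₀ + μ₁.map f₁) = ∫ x, g (f₀ x) ∂μ₀ + ∫ x, g (f₁ x) ∂μ₁ := by
    intro g hg i₀ i₁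
    have j₀ := (integrable_map_measure hg.aestronglyMeasurable m₀.aemeasurable).2 i₀
    have j₁ := (integrable_map_measure hg.aestronglyMeasurable m₁.aemeasurable).2 i₁
    refine ⟨j₀.add_measure j₁, ?_⟩
    rw [integral_add_measure j₀ j₁, integral_map m₀.aemeasurable hg.aestronglyMeasurable,
      integral_map m₁.aemeasurable hg.aestronglyMeasurable]
  refine ⟨μ₀.map f₀ + μ₁.map f₁, ⟨inferInstance, ?_, fun φ => ?_, fun φ => ?_⟩, ?_, ?_⟩
  · have hm : MeasurableSet (((Ω ×ˢ (univ : Set ℝ≥0)) ×ˢ (Ω ×ˢ (univ : Set ℝ≥0)))ᶜ) :=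
      ((hΩ.prod .univ).prod (hΩ.prod .univ)).compl
    rw [Measure.add_apply, Measure.map_apply m₀ hm, Measure.map_apply m₁ hm]
    have e₀ : f₀ ⁻¹' (((Ω ×ˢ (univ : Set ℝ≥0)) ×ˢ (Ω ×ˢ (univ : Set ℝ≥0)))ᶜ) = Ωᶜ := by
      ext x; simp [f₀]
    have e₁ : f₁ ⁻¹' (((Ω ×ˢ (univ : Set ℝ≥0)) ×ˢ (Ω ×ˢ (univ : Set ℝ≥0)))ᶜ) = Ωᶜ := by
      ext x; simp [f₁]
    rw [e₀, e₁, h₀, h₁, add_zero]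
  · rw [(hint (fun p => (p.1.2 : ℝ)^2 * φ p.1.1) (by fun_prop)
      (by simpa [Function.comp_def, f₀] using φ.integrable μ₀)
      (by simp [Function.comp_def, f₁])).2]
    simp [f₀, f₁]
  · rw [(hint (fun p => (p.2.2 : ℝ)^2 * φ p.2.1) (by fun_prop)
      (by simp [Function.comp_def, f₀])
      (by simpa [Function.comp_def, f₁] using φ.integrable μ₁)).2]
    simp [f₀, f₁]
  · exact (hint (fun p => (p.1.2 : ℝ)^2) (by fun_prop) (by simp [Function.comp_def, f₀])
      (by simp [Function.comp_def, f₁])).1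
  · exact (hint (fun p => (p.2.2 : ℝ)^2) (by fun_prop) (by simp [Function.comp_def, f₀])
      (by simp [Function.comp_def, f₁])).1

/-! ### Normalization by scaling -/

/-- The normalized pairs over `Ω`: those with `r₀² + r₁² = 1`. -/
def normSet (Ω : Set (Euc d)) : Set (Pair d) :=
  {p | p.1.1 ∈ Ω ∧ p.2.1 ∈ Ω ∧ p.1.2^2 + p.2.2^2 = 1}

lemma isCompact_normSet {Ω : Set (Euc d)} (hΩ : IsCompact Ω) : IsCompact (normSet Ω) := by
  have hK : IsCompact ((Ω ×ˢ Icc (0 : ℝ≥0) 1) ×ˢ (Ω ×ˢ Icc (0 : ℝ≥0) 1)) :=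
    (hΩ.prod isCompact_Icc).prod (hΩ.prod isCompact_Icc)
  refine hK.of_isClosed_subset ?_ ?_
  · have c := hΩ.isClosed
    exact (c.preimage (by fun_prop : Continuous fun p : Pair d => p.1.1)).inter
      ((c.preimage (by fun_prop : Continuous fun p : Pair d => p.2.1)).inter
        (isClosed_eq (f := fun p : Pair d => p.1.2^2 + p.2.2^2) (by fun_prop) continuous_const))
  · rintro p ⟨h0, h1, h⟩
    refine ⟨⟨h0, zero_le, ?_⟩, ⟨h1, zero_le, ?_⟩⟩
    · exact (pow_le_one_iff two_ne_zero).1 (h ▸ le_self_add)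
    · exact (pow_le_one_iff two_ne_zero).1 (h ▸ le_add_self)

/-- The radial size `θ` of a pair, with `θ² = r₀² + r₁²`. -/
noncomputable def size (p : Pair d) : ℝ≥0 := NNReal.sqrt (p.1.2^2 + p.2.2^2)

/-- Division of both radii by `θ`; the value at `θ = 0` is immaterial, as such pairs carry no
weight after multiplication by `θ²`. -/
noncomputable def normalize (p : Pair d) : Pair d :=
  ((p.1.1, p.1.2 / size p), (p.2.1, p.2.2 / size p))

lemma size_sq (p : Pair d) : size p ^ 2 = p.1.2^2 + p.2.2^2 := NNReal.sq_sqrt _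

lemma continuous_size : Continuous (size (d := d)) := by
  unfold size; fun_prop

lemma measurable_normalize : Measurable (normalize (d := d)) := by
  have := (continuous_size (d := d)).measurable
  unfold normalize
  fun_prop

lemma normalize_mem {Ω : Set (Euc d)} {p : Pair d} (h0 : p.1.1 ∈ Ω) (h1 : p.2.1 ∈ Ω)
    (hs : size p ≠ 0) : normalize p ∈ normSet Ω := by
  refine ⟨h0, h1, ?_⟩
  simp only [normalize, div_pow, ← add_div, size_sq]
  rw [← size_sq]
  exact div_self (pow_ne_zero 2 hs)

lemma radii_of_size {p : Pair d} (hs : size p = 0) : p.1.2 = 0 ∧ p.2.2 = 0 := by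
  have := size_sq p
  rw [hs] at this
  simpa using this.symm

/-- The homogeneous marginal conditions for measures on the space of normalized pairs. -/
def IsNormPlan (Ω : Set (Euc d)) (ν : Measure (normSet Ω)) (μ₀ μ₁ : Measure (Euc d)) : Prop :=
  (∀ φ : BoundedContinuousFunction (Euc d) ℝ,
    ∫ p, (p.1.1.2 : ℝ)^2 * φ p.1.1.1 ∂ν = ∫ x, φ x ∂μ₀) ∧
  (∀ φ : BoundedContinuousFunction (Euc d) ℝ,
    ∫ p, (p.1.2.2 : ℝ)^2 * φ p.1.2.1 ∂ν = ∫ x, φ x ∂μ₁)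

/-- Every genuine plan can be replaced by a normalized one of the same cost. -/
lemma exists_normalized {Ω : Set (Euc d)} (hΩ : IsCompact Ω) {γ : Measure (Pair d)}
    {μ₀ μ₁ : Measure (Euc d)} (h : IsGenuine Ω γ μ₀ μ₁) :
    ∃ ν : Measure (normSet Ω), IsFiniteMeasure ν ∧ IsNormPlan Ω ν μ₀ μ₁ ∧
      ∫ p, cost p.1 ∂ν = ∫ p, cost p ∂γ := by
  obtain ⟨⟨hfin, hsupp, hm0, hm1⟩, i0, i1⟩ := h
  have hK : MeasurableSet (normSet Ω) := (isCompact_normSet hΩ).isClosed.measurableSet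
  have hsm : Measurable fun p : Pair d => size p ^ 2 := (continuous_size.pow 2).measurable
  let w : Measure (Pair d) := γ.withDensity fun p => ((size p ^ 2 : ℝ≥0) : ℝ≥0∞)
  have hw : IsFiniteMeasure w := by
    have := isFiniteMeasure_withDensity_ofReal (i0.add i1).hasFiniteIntegral
    convert this using 3 with p
    rw [size_sq]
    simp [ENNReal.ofReal_add, ENNReal.ofReal_pow]
  let γ' : Measure (Pair d) := w.map normalize
  have hγ' : ∀ᵐ p ∂γ', p ∈ normSet Ω := by
    refine (ae_map_iff measurable_normalize.aemeasurable hK).2 ?_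
    refine (ae_withDensity_iff hsm.coe_nnreal_ennreal).2 ?_
    have hae : ∀ᵐ p ∂γ, p ∈ (Ω ×ˢ (univ : Set ℝ≥0)) ×ˢ (Ω ×ˢ (univ : Set ℝ≥0)) := hsupp
    filter_upwards [hae] with p hp hs
    exact normalize_mem hp.1.1 hp.2.1 (by simpa using hs)
  -- Integrals of `2`-homogeneous functions are unchanged by the normalization.
  have key : ∀ g : Pair d → ℝ, Continuous g →
      (∀ p : Pair d, (size p : ℝ)^2 * g (normalize p) = g p) →
      ∫ p, g p.1 ∂(γ'.comap (Subtype.val : normSet Ω → Pair d)) = ∫ p, g p ∂γ := by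
    intro g hg hhom
    rw [integral_subtype_comap hK, Measure.restrict_eq_self_of_ae_mem hγ',
      integral_map measurable_normalize.aemeasurable hg.aestronglyMeasurable,
      integral_withDensity_eq_integral_smul hsm]
    refine integral_congr_ae (Eventually.of_forall fun p => ?_)
    simpa [NNReal.smul_def] using hhom p
  refine ⟨γ'.comap Subtype.val, ?_, ⟨fun φ => ?_, fun φ => ?_⟩, ?_⟩
  · infer_instance
  · rw [← hm0 φ]
    refine key (fun p => (p.1.2 : ℝ)^2 * φ p.1.1) (by fun_prop) fun p => ?_
    by_cases hs : size p = 0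
    · simp [hs, radii_of_size hs]
    · have : (size p : ℝ) ≠ 0 := by exact_mod_cast hs
      simp only [normalize, NNReal.coe_div]
      field_simp
  · rw [← hm1 φ]
    refine key (fun p => (p.2.2 : ℝ)^2 * φ p.2.1) (by fun_prop) fun p => ?_
    by_cases hs : size p = 0
    · simp [hs, radii_of_size hs]
    · have : (size p : ℝ) ≠ 0 := by exact_mod_cast hs
      simp only [normalize, NNReal.coe_div]
      field_simp
  · refine key cost continuous_cost fun p => ?_
    by_cases hs : size p = 0
    · simp [hs, cost, radii_of_size hs]
    · have : (size p : ℝ) ≠ 0 := by exact_mod_cast hs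
      simp only [cost, normalize, NNReal.coe_div]
      field_simp

/-! ### Minimization on the compact space of normalized pairs -/

lemma integrable_of_continuous {Ω : Set (Euc d)} (hΩ : IsCompact Ω) (ν : Measure (normSet Ω))
    [IsFiniteMeasure ν] {g : Pair d → ℝ} (hg : Continuous g) :
    Integrable (fun p : normSet Ω => g p.1) ν := by
  have : CompactSpace (normSet Ω) := isCompact_iff_compactSpace.1 (isCompact_normSet hΩ)
  exact (BoundedContinuousFunction.mkOfCompact
    ⟨fun p : normSet Ω => g p.1, by fun_prop⟩).integrable ν

/-- Since `r₀² + r₁² = 1`, the marginals determine the total mass. -/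
lemma IsNormPlan.mass {Ω : Set (Euc d)} (hΩ : IsCompact Ω) {ν : Measure (normSet Ω)}
    [IsFiniteMeasure ν] {μ₀ μ₁ : Measure (Euc d)} (h : IsNormPlan Ω ν μ₀ μ₁) :
    ν.real univ = μ₀.real univ + μ₁.real univ := by
  have h0 := h.1 (BoundedContinuousFunction.const _ 1)
  have h1 := h.2 (BoundedContinuousFunction.const _ 1)
  simp only [BoundedContinuousFunction.const_apply, mul_one, integral_const, smul_eq_mul] at h0 h1
  rw [← h0, ← h1, ← integral_add
    (integrable_of_continuous hΩ ν (by fun_prop : Continuous fun p : Pair d => (p.1.2 : ℝ)^2))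
    (integrable_of_continuous hΩ ν (by fun_prop : Continuous fun p : Pair d => (p.2.2 : ℝ)^2))]
  have : ∀ p : normSet Ω, (p.1.1.2 : ℝ)^2 + (p.1.2.2 : ℝ)^2 = 1 := fun p => by
    exact_mod_cast p.2.2.2
  simp [this]

/-- A normalized plan is a genuine plan. -/
lemma IsNormPlan.isGenuine_map {Ω : Set (Euc d)} (hΩ : IsCompact Ω) {ν : Measure (normSet Ω)}
    [IsFiniteMeasure ν] {μ₀ μ₁ : Measure (Euc d)} (h : IsNormPlan Ω ν μ₀ μ₁) :
    IsGenuine Ω (ν.map Subtype.val) μ₀ μ₁ := by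
  have hm : Measurable (Subtype.val : normSet Ω → Pair d) := measurable_subtype_coe
  have hΩm := hΩ.isClosed.measurableSet
  refine ⟨⟨inferInstance, ?_, fun φ => ?_, fun φ => ?_⟩, ?_, ?_⟩
  · rw [Measure.map_apply hm ((hΩm.prod .univ).prod (hΩm.prod .univ)).compl]
    convert measure_empty (μ := ν)
    ext p
    simp [p.2.1, p.2.2.1]
  · rw [← h.1 φ]
    exact integral_map hm.aemeasurable (by fun_prop : Continuous fun p : Pair d =>
      (p.1.2 : ℝ)^2 * φ p.1.1).aestronglyMeasurable
  · rw [← h.2 φ]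
    exact integral_map hm.aemeasurable (by fun_prop : Continuous fun p : Pair d =>
      (p.2.2 : ℝ)^2 * φ p.2.1).aestronglyMeasurable
  · have hc : Continuous fun p : Pair d => (p.1.2 : ℝ)^2 := by fun_prop
    exact (integrable_map_measure hc.aestronglyMeasurable hm.aemeasurable).2
      (integrable_of_continuous hΩ ν hc)
  · have hc : Continuous fun p : Pair d => (p.2.2 : ℝ)^2 := by fun_prop
    exact (integrable_map_measure hc.aestronglyMeasurable hm.aemeasurable).2
      (integrable_of_continuous hΩ ν hc)

/-- Among genuine plans the cost attains its minimum. -/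
theorem exists_genuine_min {Ω : Set (Euc d)} (hΩ : IsCompact Ω) (μ₀ μ₁ : Measure (Euc d))
    [IsFiniteMeasure μ₀] [IsFiniteMeasure μ₁] (h₀ : μ₀ Ωᶜ = 0) (h₁ : μ₁ Ωᶜ = 0) :
    ∃ γ, IsGenuine Ω γ μ₀ μ₁ ∧
      ∀ γ', IsGenuine Ω γ' μ₀ μ₁ → ∫ p, cost p ∂γ ≤ ∫ p, cost p ∂γ' := by
  have : CompactSpace (normSet Ω) := isCompact_iff_compactSpace.1 (isCompact_normSet hΩ)
  have hcont : ∀ g : Pair d → ℝ, Continuous g →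
      Continuous fun ν : FiniteMeasure (normSet Ω) => ∫ p, g p.1 ∂(ν : Measure (normSet Ω)) :=
    fun g hg => FiniteMeasure.continuous_integral_continuousMap
      (⟨fun p => g p.1, by fun_prop⟩ : C(normSet Ω, ℝ))
  let A : Set (FiniteMeasure (normSet Ω)) := {ν | IsNormPlan Ω (ν : Measure (normSet Ω)) μ₀ μ₁}
  have hAclosed : IsClosed A := by
    simp only [A, IsNormPlan, ofPred_and, ofPred_forall]
    refine IsClosed.inter ?_ ?_
    · exact isClosed_iInter fun φ => isClosed_eq
        (hcont (fun p => (p.1.2 : ℝ)^2 * φ p.1.1) (by fun_prop)) continuous_const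
    · exact isClosed_iInter fun φ => isClosed_eq
        (hcont (fun p => (p.2.2 : ℝ)^2 * φ p.2.1) (by fun_prop)) continuous_const
  have hAcompact : IsCompact A := by
    refine (isCompact_setOfPred_finiteMeasure_le_of_compactSpace (normSet Ω)
      (μ₀.real univ + μ₁.real univ).toNNReal).of_isClosed_subset hAclosed fun ν hν => ?_
    have hmass := IsNormPlan.mass hΩ hν
    change ν.mass ≤ _
    rw [← hmass]
    exact le_of_eq (by simp [FiniteMeasure.mass])
  have hne : A.Nonempty := by
    obtain ⟨γ, hγ⟩ := exists_genuine Ω hΩ.isClosed.measurableSet μ₀ μ₁ h₀ h₁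
    obtain ⟨ν, hν, hp, -⟩ := exists_normalized hΩ hγ
    exact ⟨⟨ν, hν⟩, hp⟩
  obtain ⟨ν, hν, hmin⟩ := hAcompact.exists_isMinOn hne (hcont cost continuous_cost).continuousOn
  refine ⟨_, IsNormPlan.isGenuine_map hΩ hν, fun γ' hγ' => ?_⟩
  obtain ⟨ν', hν', hp, hc⟩ := exists_normalized hΩ hγ'
  rw [← hc, integral_map measurable_subtype_coe.aemeasurable
    continuous_cost.aestronglyMeasurable]
  exact hmin (show (⟨ν', hν'⟩ : FiniteMeasure (normSet Ω)) ∈ A from hp)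

end HKExistence

open HKExistence in
/-- For all finite nonnegative Borel measures `μ₀, μ₁` on `Ω`,
the infimum defining `HK(μ₀,μ₁)` is attained: there exists a plan `γ` with homogeneous
marginals `(μ₀,μ₁)` such that `∬ d_C(z₀,z₁)² dγ = HK(μ₀,μ₁)²`. -/
theorem HK_optimal_plan_exists {d : ℕ} (hd : 1 ≤ d) (Ω : Set (Euc d))
    (hΩc : IsCompact Ω) (hΩconv : Convex ℝ Ω)
    (μ₀ μ₁ : Measure (Euc d)) [IsFiniteMeasure μ₀] [IsFiniteMeasure μ₁]
    (hsupp₀ : μ₀ Ωᶜ = 0) (hsupp₁ : μ₁ Ωᶜ = 0) :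
    ∃ γ : Measure ((Euc d × ℝ≥0) × (Euc d × ℝ≥0)),
      IsHKPlan Ω γ μ₀ μ₁ ∧ ∫ p, (coneDist p.1 p.2)^2 ∂γ = (HK Ω μ₀ μ₁)^2 := by
  have hnonneg : ∀ γ : Measure (Pair d), 0 ≤ ∫ p, (coneDist p.1 p.2)^2 ∂γ :=
    fun γ => integral_nonneg fun p => sq_nonneg _
  -- It suffices to find a plan of least cost.
  suffices hmain : ∃ γ, IsHKPlan Ω γ μ₀ μ₁ ∧ ∀ γ', IsHKPlan Ω γ' μ₀ μ₁ →
      ∫ p, (coneDist p.1 p.2)^2 ∂γ ≤ ∫ p, (coneDist p.1 p.2)^2 ∂γ' by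
    obtain ⟨γ, hγ, hmin⟩ := hmain
    have hleast : IsLeast { I : ℝ | ∃ γ, IsHKPlan Ω γ μ₀ μ₁ ∧
        I = ∫ p, (coneDist p.1 p.2)^2 ∂γ } (∫ p, (coneDist p.1 p.2)^2 ∂γ) := by
      refine ⟨⟨γ, hγ, rfl⟩, ?_⟩
      rintro _ ⟨γ', hγ', rfl⟩
      exact hmin γ' hγ'
    have hHK : HK2 Ω μ₀ μ₁ = ∫ p, (coneDist p.1 p.2)^2 ∂γ := hleast.csInf_eq
    exact ⟨γ, hγ, by rw [HK, hHK, Real.sq_sqrt (hnonneg γ)]⟩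
  by_cases hz : ∃ γ, IsHKPlan Ω γ μ₀ μ₁ ∧ ∫ p, (coneDist p.1 p.2)^2 ∂γ = 0
  · obtain ⟨γ, hγ, h0⟩ := hz
    exact ⟨γ, hγ, fun γ' _ => h0 ▸ hnonneg γ'⟩
  · push Not at hz
    have hμ : μ₀ ≠ 0 ∨ μ₁ ≠ 0 := by
      by_contra! hμ
      obtain ⟨rfl, rfl⟩ := hμ
      exact hz 0 ⟨inferInstance, by simp, by simp, by simp⟩ (by simp)
    simp only [coneDist_sq] at hz ⊢
    obtain ⟨γ, hγ, hmin⟩ := exists_genuine_min hΩc μ₀ μ₁ hsupp₀ hsupp₁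
    exact ⟨γ, hγ.1, fun γ' hγ' => hmin γ' (hγ'.isGenuine (hz γ' hγ') hμ)⟩
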